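/- arXiv:1003.5705 — 2 statements merged into one kernel-verified Lean document; each statement's English description precedes it below -/
import Mathlib

section
/- Let s ≥ 1. There exists a constant C = C(s) > 0 such that for every N > 1 and all integers n₁,…,n₆ satisfying n₁ − n₂ + n₃ − n₄ + n₅ − n₆ = 0, |n₁| ≥ |n₂| ≥ |n₃| ≥ |n₄| ≥ |n₅| ≥ |n₆|, n₁ ≠ 0, and |n_j| ≤ |n₁|^{1/2} for j = 3,4,5,6, one has |(θ(n₁))² − (θ(n₂))² + (θ(n₃))² − (θ(n₄))² + (θ(n₅))² − (θ(n₆))²| ≤ C |n₁|^{−1/2} θ(n₁) θ(n₂). -/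
open MeasureTheory Filter

noncomputable section

/-- Fourier coefficient on `S¹ = ℝ/2πℤ` (functions on `S¹` are modeled as `2π`-periodic
functions `ℝ → ℂ`): `f̂(n) = ∫_{S¹} f(x) e^{-inx} dx`. -/
def fourierCoef (f : ℝ → ℂ) (n : ℤ) : ℂ :=
  ∫ x in (0:ℝ)..(2 * Real.pi), f x * Complex.exp (-Complex.I * (n : ℂ) * (x : ℂ))

/-- The Sobolev `H^σ` norm: `(∑_n ⟨n⟩^{2σ} |f̂(n)|²)^{1/2}`, with `⟨n⟩^{2σ} = (1+n²)^σ`. -/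
def sobolevNorm (σ : ℝ) (f : ℝ → ℂ) : ℝ :=
  (∑' n : ℤ, (1 + (n : ℝ) ^ 2) ^ σ * ‖fourierCoef f n‖ ^ 2) ^ (1/2 : ℝ)

/-- `f` is a function on `S¹`, i.e. `2π`-periodic. -/
def Periodic2pi (f : ℝ → ℂ) : Prop := ∀ x, f (x + 2 * Real.pi) = f x

/-- Membership in `H^σ(S¹)`. -/
def InHs (σ : ℝ) (f : ℝ → ℂ) : Prop :=
  Periodic2pi f ∧ Summable (fun n : ℤ => (1 + (n : ℝ) ^ 2) ^ σ * ‖fourierCoef f n‖ ^ 2)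

/-- The `L²(S¹)` norm. -/
def L2norm (f : ℝ → ℂ) : ℝ := (∫ x in (0:ℝ)..(2 * Real.pi), ‖f x‖ ^ 2) ^ (1/2 : ℝ)

/-- The mass `M(f) = ∫_{S¹} |f|² dx`. -/
def massQ (f : ℝ → ℂ) : ℝ := ∫ x in (0:ℝ)..(2 * Real.pi), ‖f x‖ ^ 2

/-- Convolution on `S¹`: `(V∗g)(x) = ∫_{S¹} V(x-y) g(y) dy`. -/
def convP (V : ℝ → ℝ) (g : ℝ → ℂ) (x : ℝ) : ℂ :=
  ∫ y in (0:ℝ)..(2 * Real.pi), (V (x - y) : ℂ) * g y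

/-- The `L¹(S¹)` norm of a real-valued `V`. -/
def L1normR (V : ℝ → ℝ) : ℝ := ∫ x in (0:ℝ)..(2 * Real.pi), |V x|

/-- Spacetime Fourier transform `ũ(n,τ) = ∫_{S¹}∫_ℝ u(x,t) e^{-inx-itτ} dt dx`
(for `u : ℝ → ℝ → ℂ`, time ↦ space ↦ value, `2π`-periodic in space). -/
def spacetimeFourier (u : ℝ → ℝ → ℂ) (n : ℤ) (τ : ℝ) : ℂ :=
  ∫ t : ℝ, ∫ x in (0:ℝ)..(2 * Real.pi),
    u t x * Complex.exp (-Complex.I * ((n : ℂ) * (x : ℂ) + (τ : ℂ) * (t : ℂ)))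

/-- The `X^{s,b}` norm: `(∑_n ∫ |ũ(n,τ)|² ⟨n⟩^{2s} ⟨τ-n²⟩^{2b} dτ)^{1/2}`. -/
def Xnorm (s b : ℝ) (u : ℝ → ℝ → ℂ) : ℝ :=
  (∑' n : ℤ, ∫ τ : ℝ, ‖spacetimeFourier u n τ‖ ^ 2 * (1 + (n : ℝ) ^ 2) ^ s *
    (1 + (τ - (n : ℝ) ^ 2) ^ 2) ^ b) ^ (1/2 : ℝ)

/-- Finiteness of the `X^{s,b}` norm. -/
def XMem (s b : ℝ) (u : ℝ → ℝ → ℂ) : Prop :=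
  (∀ n : ℤ, Integrable (fun τ : ℝ => ‖spacetimeFourier u n τ‖ ^ 2 * (1 + (n : ℝ) ^ 2) ^ s *
    (1 + (τ - (n : ℝ) ^ 2) ^ 2) ^ b)) ∧
  Summable (fun n : ℤ => ∫ τ : ℝ, ‖spacetimeFourier u n τ‖ ^ 2 * (1 + (n : ℝ) ^ 2) ^ s *
    (1 + (τ - (n : ℝ) ^ 2) ^ 2) ^ b)

/-- The multiplier `θ : [0,∞) → ℝ`, `θ(x) = (x/N)^s` for `x ≥ N`, `θ(x) = 1` for `x ≤ N`. -/
def thetaR (s N x : ℝ) : ℝ := if N ≤ x then (x / N) ^ s else 1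

/-- `θ(n) := θ(|n|)` for `n ∈ ℤ`. -/
def thetaZ (s N : ℝ) (n : ℤ) : ℝ := thetaR s N |(n : ℝ)|

/-- `E¹(f) = ‖𝒟f‖²_{L²(S¹)}`, computed via Plancherel:
`‖𝒟f‖²_{L²} = (1/2π) ∑_n θ(n)² |f̂(n)|²`. -/
def E1 (s N : ℝ) (f : ℝ → ℂ) : ℝ :=
  (1 / (2 * Real.pi)) * ∑' n : ℤ, (thetaZ s N n) ^ 2 * ‖fourierCoef f n‖ ^ 2

/-- `‖𝒟f‖_{L²(S¹)}`. -/
def DL2 (s N : ℝ) (f : ℝ → ℂ) : ℝ := (E1 s N f) ^ (1/2 : ℝ)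

/-- `‖𝒟u‖_{X^{0,b}}`, where `𝒟` is the Fourier multiplier with symbol `θ(n)`. -/
def DXnorm (s N b : ℝ) (u : ℝ → ℝ → ℂ) : ℝ :=
  (∑' n : ℤ, ∫ τ : ℝ, (thetaZ s N n) ^ 2 * ‖spacetimeFourier u n τ‖ ^ 2 *
    (1 + (τ - (n : ℝ) ^ 2) ^ 2) ^ b) ^ (1/2 : ℝ)

/-- The Japanese bracket `⟨n⟩ = (1+|n|²)^{1/2}`. -/
def jb (n : ℤ) : ℝ := Real.sqrt (1 + (n : ℝ) ^ 2)

/-- The multiplier `Ψ` on `Γ₄` for the Hartree higher modified energy. -/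
def PsiV (s N : ℝ) (V : ℝ → ℝ) (n₁ n₂ n₃ n₄ : ℤ) : ℂ :=
  if n₁ ^ 2 - n₂ ^ 2 + n₃ ^ 2 - n₄ ^ 2 ≠ 0 then
    (((thetaZ s N n₁) ^ 2 - (thetaZ s N n₂) ^ 2 + (thetaZ s N n₃) ^ 2 - (thetaZ s N n₄) ^ 2 : ℝ) : ℂ) *
      fourierCoef (fun x => (V x : ℂ)) (n₃ + n₄) /
      ((n₁ ^ 2 - n₂ ^ 2 + n₃ ^ 2 - n₄ ^ 2 : ℤ) : ℂ)
  else 0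

/-- The multiplier `Ψ₂` on `Γ₄` for the higher modified energy of the cubic NLS with potential. -/
def Psi2 (s N : ℝ) (n₁ n₂ n₃ n₄ : ℤ) : ℂ :=
  if n₁ ^ 2 - n₂ ^ 2 + n₃ ^ 2 - n₄ ^ 2 ≠ 0 then
    (((thetaZ s N n₁) ^ 2 - (thetaZ s N n₂) ^ 2 + (thetaZ s N n₃) ^ 2 - (thetaZ s N n₄) ^ 2 : ℝ) : ℂ) /
      ((n₁ ^ 2 - n₂ ^ 2 + n₃ ^ 2 - n₄ ^ 2 : ℤ) : ℂ)
  else 0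

/-- The quadrilinear functional `λ₄(M;f)`, summed over `Γ₄ = {n₁+n₂+n₃+n₄ = 0}`
(parametrized by `(n₁,n₂,n₃)`, with `n₄ = -(n₁+n₂+n₃)`). -/
def lambda4 (M : ℤ → ℤ → ℤ → ℤ → ℂ) (f : ℝ → ℂ) : ℂ :=
  ∑' p : ℤ × ℤ × ℤ,
    M p.1 p.2.1 p.2.2 (-(p.1 + p.2.1 + p.2.2)) * fourierCoef f p.1 *
      (starRingEnd ℂ) (fourierCoef f (-p.2.1)) * fourierCoef f p.2.2 *
      (starRingEnd ℂ) (fourierCoef f (p.1 + p.2.1 + p.2.2))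

/-- `u` is a (global-in-time) solution of the defocusing periodic NLS
`i∂_t u + ∂_x² u = |u|^{2k} u` on `S¹ × ℝ`. -/
def IsSolutionNLS (k : ℕ) (u : ℝ → ℝ → ℂ) : Prop :=
  (∀ t, Periodic2pi (u t)) ∧
  ∀ t x, Complex.I * deriv (fun t' => u t' x) t + deriv (deriv (u t)) x =
    ((‖u t x‖ : ℝ) : ℂ) ^ (2 * k) * u t x

/-- The conserved energy for the degree `2k+1` NLS. -/
def energyNLS (k : ℕ) (f : ℝ → ℂ) : ℝ :=
  (1/2) * (∫ x in (0:ℝ)..(2 * Real.pi), ‖deriv f x‖ ^ 2) +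
    (1 / (2 * (k : ℝ) + 2)) * (∫ x in (0:ℝ)..(2 * Real.pi), ‖f x‖ ^ (2 * k + 2))

/-- `u` is a (global-in-time) solution of the periodic Hartree equation
`i∂_t u + ∂_x² u = (V∗|u|²)u` on `S¹ × ℝ`. -/
def IsSolutionHartree (V : ℝ → ℝ) (u : ℝ → ℝ → ℂ) : Prop :=
  (∀ t, Periodic2pi (u t)) ∧
  ∀ t x, Complex.I * deriv (fun t' => u t' x) t + deriv (deriv (u t)) x =
    convP V (fun y => ((‖u t y‖ ^ 2 : ℝ) : ℂ)) x * u t x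

/-- The conserved energy for the Hartree equation. -/
def energyHartree (V : ℝ → ℝ) (f : ℝ → ℂ) : ℝ :=
  (1/2) * (∫ x in (0:ℝ)..(2 * Real.pi), ‖deriv f x‖ ^ 2) +
    (1/4) * (∫ x in (0:ℝ)..(2 * Real.pi),
      (convP V (fun y => ((‖f y‖ ^ 2 : ℝ) : ℂ)) x).re * ‖f x‖ ^ 2)

/-- `u` is a (global-in-time) solution of the cubic NLS with potential
`i∂_t u + ∂_x² u = |u|²u + λ(x)u` on `S¹ × ℝ`. -/
def IsSolutionPotNLS (lam : ℝ → ℝ) (u : ℝ → ℝ → ℂ) : Prop :=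
  (∀ t, Periodic2pi (u t)) ∧
  ∀ t x, Complex.I * deriv (fun t' => u t' x) t + deriv (deriv (u t)) x =
    ((‖u t x‖ ^ 2 : ℝ) : ℂ) * u t x + ((lam x : ℝ) : ℂ) * u t x

/-- The conserved energy for the cubic NLS with potential. -/
def energyPotNLS (lam : ℝ → ℝ) (f : ℝ → ℂ) : ℝ :=
  (1/2) * (∫ x in (0:ℝ)..(2 * Real.pi), ‖deriv f x‖ ^ 2) +
    (1/4) * (∫ x in (0:ℝ)..(2 * Real.pi), ‖f x‖ ^ 4) +
    (1/2) * (∫ x in (0:ℝ)..(2 * Real.pi), lam x * ‖f x‖ ^ 2)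

/-- `u` is a (global-in-time) solution of the cubic NLS with inhomogeneous nonlinearity
`i∂_t u + ∂_x² u = λ(x)|u|²u` on `S¹ × ℝ`. -/
def IsSolutionInhomNLS (lam : ℝ → ℝ) (u : ℝ → ℝ → ℂ) : Prop :=
  (∀ t, Periodic2pi (u t)) ∧
  ∀ t x, Complex.I * deriv (fun t' => u t' x) t + deriv (deriv (u t)) x =
    ((lam x : ℝ) : ℂ) * ((‖u t x‖ ^ 2 : ℝ) : ℂ) * u t x

/-- The conserved energy for the cubic NLS with inhomogeneous nonlinearity. -/
def energyInhomNLS (lam : ℝ → ℝ) (f : ℝ → ℂ) : ℝ :=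
  (1/2) * (∫ x in (0:ℝ)..(2 * Real.pi), ‖deriv f x‖ ^ 2) +
    (1/4) * (∫ x in (0:ℝ)..(2 * Real.pi), lam x * ‖f x‖ ^ 4)

/-- The Hartree higher modified energy `E²(f) = E¹(f) + λ₄(Ψ;f)`. -/
def E2H (s N : ℝ) (V : ℝ → ℝ) (f : ℝ → ℂ) : ℂ :=
  (E1 s N f : ℂ) + lambda4 (PsiV s N V) f

/-- The Hartree higher modified energy with multiplier `cΨ`:
`E²(f) = E¹(f) + λ₄(cΨ;f)`. -/
def E2Hc (s N : ℝ) (V : ℝ → ℝ) (c : ℝ) (f : ℝ → ℂ) : ℂ :=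
  (E1 s N f : ℂ) + lambda4 (fun a b c' d => (c : ℂ) * PsiV s N V a b c' d) f

/-- The higher modified energy with multiplier `cΨ₂` for the cubic NLS with potential:
`E²(f) = E¹(f) + λ₄(cΨ₂;f)`. -/
def E2Pc (s N c : ℝ) (f : ℝ → ℂ) : ℂ :=
  (E1 s N f : ℂ) + lambda4 (fun a b c' d => (c : ℂ) * Psi2 s N a b c' d) f

end

theorem one_le_thetaR {s N : ℝ} (hs : 0 ≤ s) (hN : 0 < N) (x : ℝ) : 1 ≤ thetaR s N x := by
  unfold thetaR
  split_ifs with h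
  · exact Real.one_le_rpow ((one_le_div hN).2 h) hs
  · exact le_rfl

theorem thetaR_mono {s N : ℝ} (hs : 0 ≤ s) (hN : 0 < N) : Monotone (thetaR s N) := by
  intro y x hyx
  by_cases hy : N ≤ y
  · rw [thetaR, thetaR, if_pos hy, if_pos (hy.trans hyx)]
    have : 0 ≤ y / N := div_nonneg (hN.le.trans hy) hN.le
    gcongr
  · rw [thetaR, if_neg hy]
    exact one_le_thetaR hs hN x

/-- `θ` grows at most like the power `x ^ s`. -/
theorem div_rpow_mul_thetaR_le {s N x y : ℝ} (hs : 0 ≤ s) (hN : 0 < N) (hy : 0 ≤ y)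
    (hx : 0 < x) (hyx : y ≤ x) : (y / x) ^ s * thetaR s N x ≤ thetaR s N y := by
  by_cases hNx : N ≤ x
  · have key : (y / x) ^ s * thetaR s N x = (y / N) ^ s := by
      rw [thetaR, if_pos hNx, ← Real.mul_rpow (by positivity) (by positivity),
        div_mul_div_cancel₀ hx.ne']
    rw [key, thetaR]
    split_ifs with hNy
    · exact le_rfl
    · exact Real.rpow_le_one (by positivity) ((div_le_one hN).2 (not_le.1 hNy).le) hs
  · rw [thetaR, if_neg hNx, mul_one]
    exact (Real.rpow_le_one (by positivity) ((div_le_one hx).2 hyx) hs).trans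
      (one_le_thetaR hs hN y)

theorem thetaR_sq_sub_sq_le {s N x y : ℝ} (hs : 1 ≤ s) (hN : 0 < N) (hy : 0 ≤ y)
    (hx : 0 < x) (hyx : y ≤ x) :
    thetaR s N x ^ 2 - thetaR s N y ^ 2 ≤ 2 * s * (1 - y / x) * thetaR s N x ^ 2 := by
  have hr : 0 ≤ y / x := by positivity
  have hθ : 0 ≤ thetaR s N x := zero_le_one.trans (one_le_thetaR (by linarith) hN x)
  have hscale := div_rpow_mul_thetaR_le (by linarith) hN hy hx hyx (s := s)
  have hsq : ((y / x) ^ s * thetaR s N x) ^ 2 ≤ thetaR s N y ^ 2 := by gcongr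
  have hbern : 1 + 2 * s * (y / x - 1) ≤ ((y / x) ^ s) ^ 2 := by
    have h := one_add_mul_self_le_rpow_one_add (s := y / x - 1) (p := 2 * s) (by linarith)
      (by linarith)
    rwa [add_sub_cancel, mul_comm 2 s, Real.rpow_mul hr, Real.rpow_two, mul_comm s 2] at h
  have := mul_le_mul_of_nonneg_right hbern (sq_nonneg (thetaR s N x))
  rw [mul_pow] at hsq
  linarith

theorem thetaR_sq_sub_one_le {s N x y : ℝ} (hs : 1 ≤ s) (hN : 0 < N) (hy : 0 ≤ y)
    (hx : 0 < x) (hyx : y ≤ x) :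
    thetaR s N y ^ 2 - 1 ≤ y / x * thetaR s N x ^ 2 := by
  have hr : 0 ≤ y / x := by positivity
  have hr' : y / x ≤ 1 := (div_le_one hx).2 hyx
  by_cases hNy : N ≤ y
  · have key : thetaR s N y = (y / x) ^ s * thetaR s N x := by
      rw [thetaR, thetaR, if_pos hNy, if_pos (hNy.trans hyx),
        ← Real.mul_rpow hr (by positivity), div_mul_div_cancel₀ hx.ne']
    have hpow : ((y / x) ^ s) ^ 2 ≤ y / x := by
      have h0 : 0 ≤ (y / x) ^ s := by positivity
      have h1 : (y / x) ^ s ≤ y / x := Real.rpow_le_self_of_le_one hr hr' hs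
      nlinarith
    rw [key, mul_pow]
    have := mul_le_mul_of_nonneg_right hpow (sq_nonneg (thetaR s N x))
    linarith
  · rw [thetaR, if_neg hNy]
    have : 0 ≤ y / x * thetaR s N x ^ 2 := by positivity
    linarith

/-- Two low frequencies contribute at most `θ(x)² / √x` to the alternating sum. -/
theorem abs_thetaR_sq_sub_sq_le {s N x y z : ℝ} (hs : 1 ≤ s) (hN : 0 < N) (hz : 0 ≤ z)
    (hzy : z ≤ y) (hx : 1 ≤ x) (hyx : y ≤ x ^ (1 / 2 : ℝ)) :
    |thetaR s N y ^ 2 - thetaR s N z ^ 2| ≤ x ^ (-(1 / 2) : ℝ) * thetaR s N x ^ 2 := by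
  have hx0 : 0 < x := by linarith
  have hyx' : y ≤ x := hyx.trans (Real.rpow_le_self_of_one_le hx (by norm_num))
  have hz1 : 1 ≤ thetaR s N z := one_le_thetaR (by linarith) hN z
  have hmono : thetaR s N z ≤ thetaR s N y := thetaR_mono (by linarith) hN hzy
  have hdiv : y / x ≤ x ^ (-(1 / 2) : ℝ) := by
    rw [div_le_iff₀ hx0, ← Real.rpow_add_one hx0.ne']
    norm_num at hyx ⊢
    exact hyx
  have h := thetaR_sq_sub_one_le hs hN (hz.trans hzy) hx0 hyx' (s := s)
  have h' := mul_le_mul_of_nonneg_right hdiv (sq_nonneg (thetaR s N x))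
  rw [abs_of_nonneg (by nlinarith)]
  nlinarith

/-- the multiplier cancellation bound `M₆ = O(N₁^{-1/2}θ(n₁)θ(n₂))`: if
`n₁-n₂+n₃-n₄+n₅-n₆ = 0`, `|n₁| ≥ ⋯ ≥ |n₆|`, `n₁ ≠ 0` and `|n_j| ≤ |n₁|^{1/2}` for
`j = 3,4,5,6`, then the alternating sum of `θ(n_j)²` is `≤ C|n₁|^{-1/2}θ(n₁)θ(n₂)`. -/
theorem multiplier_cancellation_bound (s : ℝ) (hs : 1 ≤ s) :
    ∃ C : ℝ, 0 < C ∧ ∀ N : ℝ, 1 < N → ∀ n₁ n₂ n₃ n₄ n₅ n₆ : ℤ,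
      n₁ - n₂ + n₃ - n₄ + n₅ - n₆ = 0 →
      |n₂| ≤ |n₁| → |n₃| ≤ |n₂| → |n₄| ≤ |n₃| → |n₅| ≤ |n₄| → |n₆| ≤ |n₅| →
      n₁ ≠ 0 →
      |(n₃ : ℝ)| ≤ |(n₁ : ℝ)| ^ (1/2 : ℝ) → |(n₄ : ℝ)| ≤ |(n₁ : ℝ)| ^ (1/2 : ℝ) →
      |(n₅ : ℝ)| ≤ |(n₁ : ℝ)| ^ (1/2 : ℝ) → |(n₆ : ℝ)| ≤ |(n₁ : ℝ)| ^ (1/2 : ℝ) →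
      |(thetaZ s N n₁) ^ 2 - (thetaZ s N n₂) ^ 2 + (thetaZ s N n₃) ^ 2 - (thetaZ s N n₄) ^ 2 +
          (thetaZ s N n₅) ^ 2 - (thetaZ s N n₆) ^ 2| ≤
        C * |(n₁ : ℝ)| ^ (-(1/2) : ℝ) * thetaZ s N n₁ * thetaZ s N n₂ := by
  refine ⟨(8 * s + 2) * 5 ^ s, by positivity, ?_⟩
  intro N hN n₁ n₂ n₃ n₄ n₅ n₆ hsum h₂ h₃ h₄ h₅ h₆ hne b₃ b₄ b₅ b₆
  have hN0 : 0 < N := by linarith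
  have hs0 : 0 ≤ s := by linarith
  have hsub : |n₁| - |n₂| ≤ |n₃| + |n₄| + |n₅| + |n₆| := by grind
  have hle : |n₁| ≤ 5 * |n₂| := by linarith
  have hone : 1 ≤ |n₁| := Int.one_le_abs hne
  rify at h₂ h₄ h₆ hsub hle hone
  unfold thetaZ
  generalize |(n₁ : ℝ)| = a at *
  generalize |(n₂ : ℝ)| = b at *
  have ha0 : 0 < a := by linarith
  have hb0 : 0 ≤ b := by linarith
  have low₃ := abs_le.1 (abs_thetaR_sq_sub_sq_le hs hN0 (abs_nonneg (n₄ : ℝ)) h₄ hone b₃)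
  have low₅ := abs_le.1 (abs_thetaR_sq_sub_sq_le hs hN0 (abs_nonneg (n₆ : ℝ)) h₆ hone b₅)
  have high := thetaR_sq_sub_sq_le hs hN0 hb0 ha0 h₂ (s := s)
  have hmono : thetaR s N b ≤ thetaR s N a := thetaR_mono hs0 hN0 h₂
  have hb1 : 1 ≤ thetaR s N b := one_le_thetaR hs0 hN0 b
  have hgap : 1 - b / a ≤ 4 * a ^ (-(1 / 2) : ℝ) := by
    have hpow : a ^ (-(1 / 2) : ℝ) * a = a ^ (1 / 2 : ℝ) := by
      rw [← Real.rpow_add_one ha0.ne']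
      norm_num
    rw [one_sub_div ha0.ne', div_le_iff₀ ha0, mul_assoc, hpow]
    linarith
  have hcomp : thetaR s N a ≤ 5 ^ s * thetaR s N b := by
    have hfifth : (1 / 5 : ℝ) ^ s ≤ (b / a) ^ s := by
      refine Real.rpow_le_rpow (by norm_num) ?_ hs0
      rw [div_le_div_iff₀ (by norm_num) ha0]
      linarith
    have hscale := (mul_le_mul_of_nonneg_right hfifth (by linarith)).trans
      (div_rpow_mul_thetaR_le hs0 hN0 hb0 ha0 h₂ (s := s))
    rwa [one_div, Real.inv_rpow (by norm_num), inv_mul_le_iff₀ (by positivity)] at hscale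
  have hP : 0 ≤ a ^ (-(1 / 2) : ℝ) := by positivity
  generalize a ^ (-(1 / 2) : ℝ) = P at *
  have hhigh : 2 * s * (1 - b / a) * thetaR s N a ^ 2 ≤ 2 * s * (4 * P) * thetaR s N a ^ 2 := by
    gcongr
  have hdom : (8 * s + 2) * P * thetaR s N a * thetaR s N a
      ≤ (8 * s + 2) * P * thetaR s N a * (5 ^ s * thetaR s N b) := by
    have : 0 ≤ thetaR s N a := by linarith
    gcongr
  have hsq : thetaR s N b ^ 2 ≤ thetaR s N a ^ 2 := by gcongr
  have hPθ : 0 ≤ s * P * thetaR s N a ^ 2 := by positivity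
  have hgoal : (8 * s + 2) * 5 ^ s * P * thetaR s N a * thetaR s N b
      = (8 * s + 2) * P * thetaR s N a * (5 ^ s * thetaR s N b) := by ring
  rw [hgoal]
  refine le_trans ?_ hdom
  rw [abs_le]
  constructor <;> nlinarith
end

section
/- Let s ≥ 1. There exists a constant C = C(s) > 0 such that for every N > 1, every V ∈ L¹(S¹), and every (n₁,n₂,n₃,n₄) ∈ Γ₄, one has |Ψ(n₁,n₂,n₃,n₄)| ≤ C ‖V‖_{L¹} m₁^{−2} θ(m₁) θ(m₂) m₃ m₄, where m₁ ≥ m₂ ≥ m₃ ≥ m₄ denotes the decreasing rearrangement of (⟨n₁⟩, ⟨n₂⟩, ⟨n₃⟩, ⟨n₄⟩) with ⟨n⟩ = (1+|n|²)^{1/2}. -/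
open MeasureTheory Filter

theorem norm_fourierCoef_ofReal_le (V : ℝ → ℝ) (n : ℤ) :
    ‖fourierCoef (fun x => (V x : ℂ)) n‖ ≤ L1normR V := by
  unfold fourierCoef L1normR
  refine (intervalIntegral.norm_integral_le_integral_norm (by positivity)).trans (le_of_eq ?_)
  refine intervalIntegral.integral_congr fun x _ => ?_
  have h : -Complex.I * (n : ℂ) * (x : ℂ) = ((-(n * x) : ℝ) : ℂ) * Complex.I := by
    push_cast; ring
  simp only [norm_mul, h, Complex.norm_exp_ofReal_mul_I, mul_one, Complex.norm_real,
    Real.norm_eq_abs]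

theorem L1normR_nonneg (V : ℝ → ℝ) : 0 ≤ L1normR V :=
  intervalIntegral.integral_nonneg (by positivity) fun _ _ => abs_nonneg _

theorem one_le_jb (n : ℤ) : 1 ≤ jb n :=
  Real.one_le_sqrt.mpr (by nlinarith [sq_nonneg (n : ℝ)])

theorem abs_le_jb (n : ℤ) : |(n : ℝ)| ≤ jb n :=
  Real.abs_le_sqrt (by linarith)

theorem jb_le_add_abs_add (x y : ℤ) : jb x ≤ jb y + |(x : ℝ) + y| := by
  have hy := abs_le_jb y
  have hy1 := one_le_jb y
  have hsq : jb y ^ 2 = 1 + (y : ℝ) ^ 2 := Real.sq_sqrt (by positivity)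
  refine Real.sqrt_le_iff.mpr ⟨by positivity, ?_⟩
  have h1 : -(y : ℝ) * (x + y) ≤ jb y * |(x : ℝ) + y| := by
    refine (le_abs_self _).trans ?_
    rw [abs_mul, abs_neg]
    gcongr
  nlinarith [sq_abs ((x : ℝ) + y)]

theorem jb_le_add_add {x y z w : ℤ} (h : x + y + z + w = 0) : jb x ≤ jb y + jb z + jb w := by
  have h' : (x : ℝ) + y + z + w = 0 := by exact_mod_cast h
  have h1 := jb_le_add_abs_add x y
  have h2 : |(x : ℝ) + y| ≤ |(z : ℝ)| + |(w : ℝ)| := by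
    rw [show (x : ℝ) + y = -(z + w) by linarith, abs_neg]
    exact abs_add_le _ _
  linarith [abs_le_jb z, abs_le_jb w]

/-- The span of the brackets on `Γ₄` is controlled by the two pair sums `n₁ + n₂`, `n₁ + n₄`. -/
theorem jb_le_jb_add_abs_of_mem {n₁ n₂ n₃ n₄ : ℤ} (h : n₁ + n₂ + n₃ + n₄ = 0) {x y : ℤ}
    (hx : x = n₁ ∨ x = n₂ ∨ x = n₃ ∨ x = n₄) (hy : y = n₁ ∨ y = n₂ ∨ y = n₃ ∨ y = n₄) :
    jb x ≤ jb y + (|(n₁ : ℝ) + n₂| + |(n₁ : ℝ) + n₄|) := by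
  have h' : (n₁ : ℝ) + n₂ + n₃ + n₄ = 0 := by exact_mod_cast h
  have e34 : |(n₃ : ℝ) + n₄| = |(n₁ : ℝ) + n₂| := by
    rw [show (n₃ : ℝ) + n₄ = -(n₁ + n₂) by linarith, abs_neg]
  have e23 : |(n₂ : ℝ) + n₃| = |(n₁ : ℝ) + n₄| := by
    rw [show (n₂ : ℝ) + n₃ = -(n₁ + n₄) by linarith, abs_neg]
  have h12 := jb_le_add_abs_add n₁ n₂
  have h21 := jb_le_add_abs_add n₂ n₁
  have h34 := jb_le_add_abs_add n₃ n₄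
  have h43 := jb_le_add_abs_add n₄ n₃
  have h14 := jb_le_add_abs_add n₁ n₄
  have h41 := jb_le_add_abs_add n₄ n₁
  have h23 := jb_le_add_abs_add n₂ n₃
  have h32 := jb_le_add_abs_add n₃ n₂
  rw [add_comm (n₂ : ℝ) n₁] at h21
  rw [add_comm (n₄ : ℝ) n₃, e34] at h43
  rw [add_comm (n₄ : ℝ) n₁] at h41
  rw [add_comm (n₃ : ℝ) n₂, e23] at h32
  rw [e34] at h34
  rw [e23] at h23
  have ha := abs_nonneg ((n₁ : ℝ) + n₂)
  have hb := abs_nonneg ((n₁ : ℝ) + n₄)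
  rcases hx with rfl | rfl | rfl | rfl <;> rcases hy with rfl | rfl | rfl | rfl <;> linarith

theorem abs_rpow_sub_rpow_le {p K u v : ℝ} (hp : 1 ≤ p) (hu : 0 ≤ u) (huK : u ≤ K)
    (hv : 0 ≤ v) (hvK : v ≤ K) : |u ^ p - v ^ p| ≤ p * K ^ (p - 1) * |u - v| := by
  have h := (convex_Icc (0 : ℝ) K).norm_image_sub_le_of_norm_hasDerivWithin_le
    (f := fun x : ℝ => x ^ p) (f' := fun x => p * x ^ (p - 1)) (C := p * K ^ (p - 1))
    (fun x _ => (Real.hasDerivAt_rpow_const (Or.inr hp)).hasDerivWithinAt)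
    (fun x hx => by
      have hx0 := hx.1
      rw [Real.norm_of_nonneg (by positivity)]
      gcongr
      exact hx.2)
    ⟨hv, hvK⟩ ⟨hu, huK⟩
  simpa only [Real.norm_eq_abs] using h

theorem thetaR_eq_max_rpow {s N x : ℝ} (hN : 0 < N) : thetaR s N x = max 1 (x / N) ^ s := by
  unfold thetaR
  split_ifs with h
  · rw [max_eq_right ((one_le_div hN).mpr h)]
  · rw [max_eq_left ((div_le_one hN).mpr (not_le.mp h).le), Real.one_rpow]

theorem thetaR_nonneg {s N x : ℝ} (hN : 0 < N) : 0 ≤ thetaR s N x := by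
  rw [thetaR_eq_max_rpow hN]
  positivity

theorem div_rpow_le_thetaR {s N x : ℝ} (hs : 0 ≤ s) (hN : 0 < N) (hx : 0 ≤ x) :
    (x / N) ^ s ≤ thetaR s N x := by
  rw [thetaR_eq_max_rpow hN]
  exact Real.rpow_le_rpow (by positivity) (le_max_right _ _) hs

theorem abs_sq_thetaZ_sub_sq_thetaZ_le {s N M : ℝ} (hs : 1 ≤ s) (hN : 0 < N) (hM : N ≤ M)
    {x y : ℤ} (hx : |(x : ℝ)| ≤ M) (hy : |(y : ℝ)| ≤ M) :
    |thetaZ s N x ^ 2 - thetaZ s N y ^ 2| ≤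
      2 * s * ((M / N) ^ s) ^ 2 / M * |(x : ℝ) + y| := by
  have hM0 : 0 < M := hN.trans_le hM
  have hK : 0 < M / N := by positivity
  have hsq : ∀ t : ℝ, 0 ≤ t → (t ^ s) ^ 2 = t ^ (2 * s) := fun t ht => by
    rw [← Real.rpow_natCast, ← Real.rpow_mul ht]
    congr 1
    push_cast
    ring
  have hle : ∀ t : ℝ, t ≤ M → max 1 (t / N) ≤ M / N := fun t ht =>
    max_le ((one_le_div hN).mpr hM) (by gcongr)
  unfold thetaZ
  rw [thetaR_eq_max_rpow hN, thetaR_eq_max_rpow hN, hsq _ (by positivity), hsq _ (by positivity),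
    hsq _ hK.le]
  refine (abs_rpow_sub_rpow_le (by linarith) (by positivity) (hle _ hx) (by positivity)
    (hle _ hy)).trans ?_
  have h1 : |max 1 (|(x : ℝ)| / N) - max 1 (|(y : ℝ)| / N)| ≤ |(x : ℝ) + y| / N := by
    refine (abs_max_sub_max_le_max _ _ _ _).trans (max_le ?_ ?_)
    · rw [sub_self, abs_zero]
      positivity
    · rw [← sub_div, abs_div, abs_of_pos hN]
      refine div_le_div_of_nonneg_right ?_ hN.le
      simpa using abs_abs_sub_abs_le (x : ℝ) (-y)
  calc 2 * s * (M / N) ^ (2 * s - 1) * |max 1 (|(x : ℝ)| / N) - max 1 (|(y : ℝ)| / N)|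
      ≤ 2 * s * (M / N) ^ (2 * s - 1) * (|(x : ℝ) + y| / N) := by gcongr
    _ = 2 * s * (M / N) ^ (2 * s) / M * |(x : ℝ) + y| := by
      rw [Real.rpow_sub_one hK.ne']
      field_simp

theorem abs_alternating_sq_thetaZ_le {s N M : ℝ} (hs : 1 ≤ s) (hN : 0 < N) (hM : N ≤ M)
    {n₁ n₂ n₃ n₄ : ℤ} (h : n₁ + n₂ + n₃ + n₄ = 0) (h₁ : |(n₁ : ℝ)| ≤ M) (h₂ : |(n₂ : ℝ)| ≤ M)
    (h₃ : |(n₃ : ℝ)| ≤ M) (h₄ : |(n₄ : ℝ)| ≤ M) :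
    |thetaZ s N n₁ ^ 2 - thetaZ s N n₂ ^ 2 + thetaZ s N n₃ ^ 2 - thetaZ s N n₄ ^ 2| ≤
      4 * s * ((M / N) ^ s) ^ 2 / M * |(n₁ : ℝ) + n₂| := by
  have h' : (n₁ : ℝ) + n₂ + n₃ + n₄ = 0 := by exact_mod_cast h
  have e34 : |(n₃ : ℝ) + n₄| = |(n₁ : ℝ) + n₂| := by
    rw [show (n₃ : ℝ) + n₄ = -(n₁ + n₂) by linarith, abs_neg]
  have h12 := abs_sq_thetaZ_sub_sq_thetaZ_le hs hN hM h₁ h₂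
  have h34 := abs_sq_thetaZ_sub_sq_thetaZ_le hs hN hM h₃ h₄
  rw [e34] at h34
  have ht := abs_add_le (thetaZ s N n₁ ^ 2 - thetaZ s N n₂ ^ 2)
    (thetaZ s N n₃ ^ 2 - thetaZ s N n₄ ^ 2)
  rw [show thetaZ s N n₁ ^ 2 - thetaZ s N n₂ ^ 2 + thetaZ s N n₃ ^ 2 - thetaZ s N n₄ ^ 2 =
    thetaZ s N n₁ ^ 2 - thetaZ s N n₂ ^ 2 + (thetaZ s N n₃ ^ 2 - thetaZ s N n₄ ^ 2) by ring]
  refine (ht.trans (add_le_add h12 h34)).trans (le_of_eq ?_)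
  ring

theorem thetaZ_eq_one {s N : ℝ} {n : ℤ} (h : |(n : ℝ)| < N) : thetaZ s N n = 1 :=
  if_neg (not_le.mpr h)

theorem resonance_eq_mul {n₁ n₂ n₃ n₄ : ℤ} (h : n₁ + n₂ + n₃ + n₄ = 0) :
    n₁ ^ 2 - n₂ ^ 2 + n₃ ^ 2 - n₄ ^ 2 = 2 * (n₁ + n₂) * (n₁ + n₄) := by
  obtain rfl : n₃ = -(n₁ + n₂ + n₄) := by linarith
  ring

/-- The numerator gains one factor `min(|a|, |b|)` over the resonance `2ab`, and the remaining
factor `max(|a|, |b|)` is bounded below by `m₁ / (3 m₃ m₄)`. -/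
theorem div_le_of_le_mul_abs {A M X a b m₃ m₄ : ℝ} (hA : 0 ≤ A) (hM : 0 < M)
    (ha : 1 ≤ |a|) (hb : 1 ≤ |b|) (hXa : X ≤ A / M * |a|) (hXb : X ≤ A / M * |b|)
    (hm₃ : 1 ≤ m₃) (hm₄ : 1 ≤ m₄) (hMab : M ≤ m₄ + (|a| + |b|)) :
    X / (|a| * |b|) ≤ 3 * A * (m₃ * m₄) / M ^ 2 := by
  wlog hab : |a| ≤ |b| generalizing a b
  · rw [mul_comm |a|]
    exact this hb ha hXb hXa (by linarith) (not_le.mp hab).le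
  have hmax : M ≤ 3 * |b| * (m₃ * m₄) := by
    have h1 : M ≤ 3 * (|b| * m₄) := by nlinarith
    nlinarith [mul_nonneg (sub_nonneg.mpr hm₃) (by positivity : 0 ≤ |b| * m₄)]
  rw [div_le_div_iff₀ (by positivity) (by positivity)]
  calc X * M ^ 2 ≤ A / M * |a| * M ^ 2 := by gcongr
    _ = A * |a| * M := by field_simp
    _ ≤ A * |a| * (3 * |b| * (m₃ * m₄)) := by gcongr
    _ = 3 * A * (m₃ * m₄) * (|a| * |b|) := by ring

/-- Lemma 4.2: pointwise bound on the multiplier `Ψ`: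
`|Ψ| ≤ C‖V‖_{L¹} m₁^{-2} θ(m₁)θ(m₂) m₃ m₄` on `Γ₄`, where `m₁ ≥ m₂ ≥ m₃ ≥ m₄` is the
decreasing rearrangement of the Japanese brackets `⟨n₁⟩,…,⟨n₄⟩`. -/
theorem Psi_pointwise_bound (s : ℝ) (hs : 1 ≤ s) :
    ∃ C : ℝ, 0 < C ∧ ∀ N : ℝ, 1 < N → ∀ V : ℝ → ℝ,
      (∀ x, V (x + 2 * Real.pi) = V x) →
      IntervalIntegrable V volume 0 (2 * Real.pi) →
      ∀ n₁ n₂ n₃ n₄ : ℤ, n₁ + n₂ + n₃ + n₄ = 0 →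
      ∀ m₁ m₂ m₃ m₄ : ℝ, m₄ ≤ m₃ → m₃ ≤ m₂ → m₂ ≤ m₁ →
        ({m₁, m₂, m₃, m₄} : Multiset ℝ) = {jb n₁, jb n₂, jb n₃, jb n₄} →
        ‖PsiV s N V n₁ n₂ n₃ n₄‖ ≤
          C * L1normR V * m₁ ^ (-(2:ℝ)) * thetaR s N m₁ * thetaR s N m₂ * m₃ * m₄ := by
  refine ⟨6 * s * 3 ^ s, by positivity, ?_⟩
  intro N hN V _ _ n₁ n₂ n₃ n₄ h m₁ m₂ m₃ m₄ h43 h32 h21 hm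
  have hN0 : 0 < N := by linarith
  have hmem : ∀ x, (x = m₁ ∨ x = m₂ ∨ x = m₃ ∨ x = m₄) ↔
      (x = jb n₁ ∨ x = jb n₂ ∨ x = jb n₃ ∨ x = jb n₄) := fun x => by
    simpa using congrArg (x ∈ ·) hm
  have hle : ∀ x, (x = jb n₁ ∨ x = jb n₂ ∨ x = jb n₃ ∨ x = jb n₄) → x ≤ m₁ := fun x hx => by
    rcases (hmem x).mpr hx with rfl | rfl | rfl | rfl <;> linarith
  have hsum : m₁ + m₂ + m₃ + m₄ = jb n₁ + jb n₂ + jb n₃ + jb n₄ := by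
    simpa [add_assoc] using congrArg Multiset.sum hm
  obtain ⟨k, hk, hkm⟩ : ∃ k, (k = n₁ ∨ k = n₂ ∨ k = n₃ ∨ k = n₄) ∧ m₁ = jb k := by
    simpa using (hmem m₁).mp (by simp)
  obtain ⟨l, hl, hlm⟩ : ∃ l, (l = n₁ ∨ l = n₂ ∨ l = n₃ ∨ l = n₄) ∧ m₄ = jb l := by
    simpa using (hmem m₄).mp (by simp)
  have hm4 : 1 ≤ m₄ := hlm ▸ one_le_jb l
  have hm3 : 1 ≤ m₃ := hm4.trans h43
  have hm1 : 0 < m₁ := by linarith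
  have hm2_pos : 0 < m₂ := by linarith
  have hm2 : m₁ ≤ 3 * m₂ := by
    have h2 : 2 * m₁ ≤ m₁ + m₂ + m₃ + m₄ := by
      rw [hsum, hkm]
      rcases hk with rfl | rfl | rfl | rfl
      · linarith [jb_le_add_add h]
      · linarith [jb_le_add_add (show k + n₁ + n₃ + n₄ = 0 by linarith)]
      · linarith [jb_le_add_add (show k + n₁ + n₂ + n₄ = 0 by linarith)]
      · linarith [jb_le_add_add (show k + n₁ + n₂ + n₃ = 0 by linarith)]
    linarith
  have hspan := jb_le_jb_add_abs_of_mem h hk hl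
  rw [← hkm, ← hlm] at hspan
  have b₁ : |(n₁ : ℝ)| ≤ m₁ := (abs_le_jb _).trans (hle _ (by simp))
  have b₂ : |(n₂ : ℝ)| ≤ m₁ := (abs_le_jb _).trans (hle _ (by simp))
  have b₃ : |(n₃ : ℝ)| ≤ m₁ := (abs_le_jb _).trans (hle _ (by simp))
  have b₄ : |(n₄ : ℝ)| ≤ m₁ := (abs_le_jb _).trans (hle _ (by simp))
  have hV := L1normR_nonneg V
  have hθ₁ : 0 ≤ thetaR s N m₁ := thetaR_nonneg hN0
  have hθ₂ : 0 ≤ thetaR s N m₂ := thetaR_nonneg hN0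
  have hrhs : 0 ≤ 6 * s * 3 ^ s * L1normR V * m₁ ^ (-(2:ℝ)) * thetaR s N m₁ * thetaR s N m₂ *
      m₃ * m₄ := by positivity
  unfold PsiV
  split_ifs with hD
  swap
  · simpa using hrhs
  rcases lt_or_ge m₁ N with hlt | hge
  · simpa [thetaZ_eq_one (b₁.trans_lt hlt), thetaZ_eq_one (b₂.trans_lt hlt),
      thetaZ_eq_one (b₃.trans_lt hlt), thetaZ_eq_one (b₄.trans_lt hlt)] using hrhs
  have hX₁ := abs_alternating_sq_thetaZ_le hs hN0 hge h b₁ b₂ b₃ b₄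
  have hX₂ := abs_alternating_sq_thetaZ_le hs hN0 hge
    (show n₁ + n₄ + n₃ + n₂ = 0 by linarith) b₁ b₄ b₃ b₂
  rw [show thetaZ s N n₁ ^ 2 - thetaZ s N n₄ ^ 2 + thetaZ s N n₃ ^ 2 - thetaZ s N n₂ ^ 2 =
    thetaZ s N n₁ ^ 2 - thetaZ s N n₂ ^ 2 + thetaZ s N n₃ ^ 2 - thetaZ s N n₄ ^ 2 by ring] at hX₂
  rw [resonance_eq_mul h] at hD ⊢
  have ha : 1 ≤ |(n₁ : ℝ) + n₂| := by
    have : n₁ + n₂ ≠ 0 := fun h0 => hD (by rw [h0]; ring)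
    exact_mod_cast Int.one_le_abs this
  have hb : 1 ≤ |(n₁ : ℝ) + n₄| := by
    have : n₁ + n₄ ≠ 0 := fun h0 => hD (by rw [h0]; ring)
    exact_mod_cast Int.one_le_abs this
  have hq := div_le_of_le_mul_abs (by positivity) hm1 ha hb hX₁ hX₂ hm3 hm4 hspan
  have hθ : ((m₁ / N) ^ s) ^ 2 ≤ 3 ^ s * (thetaR s N m₁ * thetaR s N m₂) := by
    have t₁ : (m₁ / N) ^ s ≤ thetaR s N m₁ := div_rpow_le_thetaR (by linarith) hN0 hm1.le
    have t₂ : (m₁ / N) ^ s ≤ 3 ^ s * thetaR s N m₂ := by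
      calc (m₁ / N) ^ s ≤ (3 * (m₂ / N)) ^ s := by
            rw [← mul_div_assoc]
            gcongr
        _ = 3 ^ s * (m₂ / N) ^ s := Real.mul_rpow (by norm_num) (by positivity)
        _ ≤ 3 ^ s * thetaR s N m₂ := by
            gcongr
            exact div_rpow_le_thetaR (by linarith) hN0 hm2_pos.le
    calc ((m₁ / N) ^ s) ^ 2 = (m₁ / N) ^ s * (m₁ / N) ^ s := sq _
      _ ≤ thetaR s N m₁ * (3 ^ s * thetaR s N m₂) := by gcongr
      _ = 3 ^ s * (thetaR s N m₁ * thetaR s N m₂) := by ring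
  have hden : ‖((2 * (n₁ + n₂) * (n₁ + n₄) : ℤ) : ℂ)‖ =
      2 * (|(n₁ : ℝ) + n₂| * |(n₁ : ℝ) + n₄|) := by
    rw [Complex.norm_intCast]
    push_cast
    rw [abs_mul, abs_mul, abs_two, mul_assoc]
  rw [norm_div, norm_mul, hden, Complex.norm_real, Real.norm_eq_abs, Real.rpow_neg hm1.le,
    Real.rpow_two]
  set X := |thetaZ s N n₁ ^ 2 - thetaZ s N n₂ ^ 2 + thetaZ s N n₃ ^ 2 - thetaZ s N n₄ ^ 2|
  calc X * ‖fourierCoef (fun x => (V x : ℂ)) (n₃ + n₄)‖ /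
        (2 * (|(n₁ : ℝ) + n₂| * |(n₁ : ℝ) + n₄|))
      = X / (|(n₁ : ℝ) + n₂| * |(n₁ : ℝ) + n₄|) *
        ‖fourierCoef (fun x => (V x : ℂ)) (n₃ + n₄)‖ / 2 := by
        field_simp
    _ ≤ 3 * (4 * s * ((m₁ / N) ^ s) ^ 2) * (m₃ * m₄) / m₁ ^ 2 * L1normR V / 2 := by
        gcongr
        exact norm_fourierCoef_ofReal_le V _
    _ ≤ 3 * (4 * s * (3 ^ s * (thetaR s N m₁ * thetaR s N m₂))) * (m₃ * m₄) / m₁ ^ 2 *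
        L1normR V / 2 := by
        gcongr
    _ = 6 * s * 3 ^ s * L1normR V * (m₁ ^ 2)⁻¹ * thetaR s N m₁ * thetaR s N m₂ * m₃ * m₄ := by
        field_simp
        ring
end
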